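/- arXiv:1810.05190 — 2 statements merged into one kernel-verified Lean document; each statement's English description precedes it below -/
import Mathlib

section
/- For all natural numbers m, n, p, r with n > r and m ≥ ⌈p/r⌉·(n+1), Breaker has a winning strategy for the (p, p+5r)-crossing game on S_{m×n}. -/
namespace CrossingGames

/-- A vertex of the square integer lattice `ℤ²`. -/
abbrev Vtx : Type := ℤ × ℤ

/-- An edge of the square integer lattice `ℤ²`, encoded as a base vertex together with a
direction: `(v, true)` is the horizontal edge joining `v = (x,y)` to `(x+1,y)`, while
`(v, false)` is the vertical edge joining `v = (x,y)` to `(x,y+1)`. -/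
abbrev Edge : Type := Vtx × Bool

/-- The two endpoints of an edge. -/
def ends (e : Edge) : Vtx × Vtx :=
  (e.1, if e.2 then (e.1.1 + 1, e.1.2) else (e.1.1, e.1.2 + 1))

/-- The edge `e` joins the vertices `u` and `v`. -/
def joins (e : Edge) (u v : Vtx) : Prop :=
  ((ends e).1 = u ∧ (ends e).2 = v) ∨ ((ends e).1 = v ∧ (ends e).2 = u)

/-- The vertex set of the grid `Λ_{m×n}`: all `(x,y) ∈ ℤ²` with `1 ≤ x ≤ m`, `1 ≤ y ≤ n`. -/
def lamVtx (m n : ℕ) : Set Vtx :=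
  {v | 1 ≤ v.1 ∧ v.1 ≤ (m : ℤ) ∧ 1 ≤ v.2 ∧ v.2 ≤ (n : ℤ)}

/-- The edge set of the grid `Λ_{m×n}`: lattice edges with both endpoints in `Λ_{m×n}`. -/
def lamEdges (m n : ℕ) : Set Edge :=
  {e | (ends e).1 ∈ lamVtx m n ∧ (ends e).2 ∈ lamVtx m n}

/-- The edge set of the board `S_{m×n}`: the grid `Λ_{m×n}` with all of its leftmost and
rightmost vertical edges deleted. -/
def sEdges (m n : ℕ) : Set Edge :=
  {e ∈ lamEdges m n | ¬ (e.2 = false ∧ (e.1.1 = 1 ∨ e.1.1 = (m : ℤ)))}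

/-- The list of consecutive pairs of a list. -/
def cp {α : Type*} (l : List α) : List (α × α) := l.zip l.tail

/-- `S` contains all the edges of a left-right crossing path of a board with `m` columns
and `n` rows: a path of edges of `S` joining a vertex `(1,y)` on the left-hand side of the
board to a vertex `(m,y')` on its right-hand side. -/
def HasCrossing (m n : ℕ) (S : Set Edge) : Prop :=
  ∃ l : List Vtx,
    (∃ v, l.head? = some v ∧ v.1 = 1) ∧
    (∃ v, l.getLast? = some v ∧ v.1 = (m : ℤ)) ∧
    (∀ v ∈ l, v ∈ lamVtx m n) ∧
    ∀ p ∈ cp l, ∃ e ∈ S, joins e p.1 p.2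

/-- A strategy: given the list of all moves played so far (oldest first), produce the
next move (a finite set of edges to claim). -/
abbrev Strategy : Type := List (Finset Edge) → Finset Edge

/-- The union of the moves sitting in positions of the given parity of a history
(`true`: positions 0, 2, 4, …; `false`: positions 1, 3, 5, …). -/
def altUnion : Bool → List (Finset Edge) → Finset Edge
  | _, [] => ∅
  | true, mv :: h => mv ∪ altUnion false h
  | false, _ :: h => altUnion true h

/-- All edges claimed by the player moving first (i.e. on even positions) in a history. -/
def firstClaimed (h : List (Finset Edge)) : Finset Edge := altUnion true h

/-- All edges claimed by the player moving second (i.e. on odd positions) in a history. -/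
def secondClaimed (h : List (Finset Edge)) : Finset Edge := altUnion false h

/-- All edges claimed so far in a history. -/
def allClaimed (h : List (Finset Edge)) : Finset Edge := h.foldr (· ∪ ·) ∅

/-- The history of moves (oldest first) after `t` full rounds, when the player moving
first uses strategy `σ` and the player moving second uses strategy `τ`. -/
def hist (σ τ : Strategy) : ℕ → List (Finset Edge)
  | 0 => []
  | t + 1 =>
    let h := hist σ τ t
    h ++ [σ h, τ (h ++ [σ h])]

/-- The move `mv` is legal on `board` after the history `h` for a player of bias `k`: it
consists of as-yet-unclaimed edges of the board, and there are exactly `k` of them, unless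
fewer than `k` unclaimed edges remain, in which case the player claims all of them. -/
def LegalMove (board : Set Edge) (h : List (Finset Edge)) (k : ℕ) (mv : Finset Edge) : Prop :=
  (↑mv : Set Edge) ⊆ board \ ↑(allClaimed h) ∧
    (mv.card = k ∨ (mv.card < k ∧ board \ ↑(allClaimed h) ⊆ (↑mv : Set Edge)))

/-- The player moving first (with bias `p`) always moves legally when playing `σ`
against `τ`. -/
def FirstLegal (board : Set Edge) (p : ℕ) (σ τ : Strategy) : Prop :=
  ∀ t, LegalMove board (hist σ τ t) p (σ (hist σ τ t))

/-- The player moving second (with bias `q`) always moves legally when playing `τ`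
against `σ`. -/
def SecondLegal (board : Set Edge) (q : ℕ) (σ τ : Strategy) : Prop :=
  ∀ t, LegalMove board (hist σ τ t ++ [σ (hist σ τ t)]) q (τ (hist σ τ t ++ [σ (hist σ τ t)]))

/-- Maker (playing first and claiming `p` edges per turn) has a winning strategy for the
Maker–Breaker game on `board` in which Breaker claims `q` edges per turn: she can
guarantee that at some point her claimed edges satisfy the winning condition `win`. -/
def MakerWins (board : Set Edge) (win : Set Edge → Prop) (p q : ℕ) : Prop :=
  ∃ σ : Strategy, ∀ τ : Strategy, SecondLegal board q σ τ →
    FirstLegal board p σ τ ∧ ∃ t, win ↑(firstClaimed (hist σ τ t))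

/-- Breaker (playing second and claiming `q` edges per turn) has a winning strategy for
the Maker–Breaker game on `board` in which Maker claims `p` edges per turn: he can
forever prevent Maker's claimed edges from satisfying the winning condition `win`. -/
def BreakerWins (board : Set Edge) (win : Set Edge → Prop) (p q : ℕ) : Prop :=
  ∃ τ : Strategy, ∀ σ : Strategy, FirstLegal board p σ τ →
    SecondLegal board q σ τ ∧ ∀ t, ¬ win ↑(firstClaimed (hist σ τ t))



/-! ### Abstract position game -/

def SN (win : Finset Edge → Prop) (D : Finset Edge) (p : ℕ) :
    ℕ → Finset Edge → Finset Edge → Prop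
  | 0, A, _ => ¬ win A
  | N + 1, A, B => ∃ b : Finset Edge, b ⊆ D ∧ b.card ≤ p ∧ Disjoint b A ∧
      ∀ a : Finset Edge, a ⊆ D → a.card ≤ p → Disjoint a (B ∪ b) →
        SN win D p N (A ∪ a) (B ∪ b)

lemma SN_mono {win : Finset Edge → Prop} (hw : ∀ A A', A ⊆ A' → win A → win A')
    {D : Finset Edge} {p : ℕ} (N : ℕ) : ∀ A B A' B' : Finset Edge, A' ⊆ A → B ⊆ B' →
    SN win D p N A B → SN win D p N A' B' := by
  induction N with
  | zero => intro A B A' B' hA hB h h'; exact h (hw _ _ hA h')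
  | succ N ih =>
    rintro A B A' B' hA hB ⟨b, hbD, hbp, hbA, h⟩
    refine ⟨b, hbD, hbp, hbA.mono_right hA, fun a haD hap hd => ?_⟩
    refine ih _ _ _ _ (Finset.union_subset_union hA subset_rfl)
      (Finset.union_subset_union hB subset_rfl) (h a haD hap ?_)
    exact hd.mono_right (Finset.union_subset_union hB subset_rfl)

lemma SN_anti {win : Finset Edge → Prop} {D : Finset Edge} {p : ℕ} (N : ℕ) :
    ∀ A B : Finset Edge, SN win D p (N + 1) A B → SN win D p N A B := by
  induction N with
  | zero =>
    rintro A B ⟨b, hbD, hbp, hbA, h⟩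
    have := h ∅ (by simp) (by simp) (by simp)
    simpa [SN] using this
  | succ N ih =>
    rintro A B ⟨b, hbD, hbp, hbA, h⟩
    exact ⟨b, hbD, hbp, hbA, fun a h1 h2 h3 => ih _ _ (h a h1 h2 h3)⟩

lemma SN_anti' {win : Finset Edge → Prop} {D : Finset Edge} {p : ℕ} {N M : ℕ} (h : N ≤ M)
    (A B : Finset Edge) : SN win D p M A B → SN win D p N A B := by
  induction M, h using Nat.le_induction with
  | base => exact id
  | succ M _ ih => exact fun h => ih (SN_anti _ _ _ h)

lemma SN_inf {win : Finset Edge → Prop} {D : Finset Edge} {p : ℕ} {A B : Finset Edge}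
    (h : ∀ N, SN win D p N A B) :
    ∃ b : Finset Edge, b ⊆ D ∧ b.card ≤ p ∧ Disjoint b A ∧
      ∀ a : Finset Edge, a ⊆ D → a.card ≤ p → Disjoint a (B ∪ b) →
        ∀ N, SN win D p N (A ∪ a) (B ∪ b) := by
  by_contra hc
  push Not at hc
  have key : ∀ b : Finset Edge, ∃ N, b ⊆ D → b.card ≤ p → Disjoint b A →
      ∃ a : Finset Edge, a ⊆ D ∧ a.card ≤ p ∧ Disjoint a (B ∪ b) ∧
        ¬ SN win D p N (A ∪ a) (B ∪ b) := by
    intro b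
    by_cases hb : b ⊆ D ∧ b.card ≤ p ∧ Disjoint b A
    · obtain ⟨a, h1, h2, h3, N, h4⟩ := hc b hb.1 hb.2.1 hb.2.2
      exact ⟨N, fun _ _ _ => ⟨a, h1, h2, h3, h4⟩⟩
    · exact ⟨0, fun h1 h2 h3 => absurd ⟨h1, h2, h3⟩ hb⟩
  choose F hF using key
  obtain ⟨b, hbD, hbp, hbA, hb⟩ := h (D.powerset.sup F + 1)
  obtain ⟨a, h1, h2, h3, h4⟩ := hF b hbD hbp hbA
  exact h4 (SN_anti' (Finset.le_sup (f := F) (Finset.mem_powerset.2 hbD)) _ _ (hb a h1 h2 h3))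

lemma steal {win : Finset Edge → Prop} (hw : ∀ A A', A ⊆ A' → win A → win A')
    {D : Finset Edge} {p : ℕ} (δ : Edge → Edge) (hδ : ∀ e, δ (δ e) = e)
    (hD : ∀ e ∈ D, δ e ∈ D)
    (hnb : ∀ A B, win A → win (B.image δ) → ¬ Disjoint A B) (N : ℕ) :
    ∀ A0 B0 : Finset Edge, ¬ SN win D p N A0 B0 → ∀ A B : Finset Edge,
      (∀ e ∈ A, δ e ∈ B0) → (∀ e ∈ A0, δ e ∈ B) → Disjoint A B →
      ∀ a : Finset Edge, a ⊆ D → a.card ≤ p → Disjoint a B → SN win D p N (A ∪ a) B := by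
  induction N with
  | zero =>
    intro A0 B0 h A B hA hA0 hAB a haD hap haB hwin
    have h : win A0 := not_not.1 h
    refine hnb _ _ hwin (hw A0 _ ?_ h) (Finset.disjoint_union_left.2 ⟨hAB, haB⟩)
    intro e he
    exact Finset.mem_image.2 ⟨δ e, hA0 e he, hδ e⟩
  | succ N ih =>
    intro A0 B0 h A B hA hA0 hAB a haD hap haB
    have h : ¬ ∃ b : Finset Edge, b ⊆ D ∧ b.card ≤ p ∧ Disjoint b A0 ∧
      ∀ a : Finset Edge, a ⊆ D → a.card ≤ p → Disjoint a (B0 ∪ b) →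
        SN win D p N (A0 ∪ a) (B0 ∪ b) := h
    push Not at h
    obtain ⟨a0, ha0D, ha0p, ha0d, hn⟩ := h (a.image δ)
      (by intro e he; obtain ⟨x, hx, rfl⟩ := Finset.mem_image.1 he; exact hD _ (haD hx))
      (Finset.card_image_le.trans hap)
      (by
        rw [Finset.disjoint_left]
        intro e he he'
        obtain ⟨x, hx, rfl⟩ := Finset.mem_image.1 he
        have := hA0 _ he'
        rw [hδ] at this
        exact Finset.disjoint_left.1 haB hx this)
    have hd : Disjoint (A ∪ a) (a0.image δ) := by
      rw [Finset.disjoint_left]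
      intro e he he'
      obtain ⟨x, hx, rfl⟩ := Finset.mem_image.1 he'
      refine Finset.disjoint_left.1 ha0d hx ?_
      rcases Finset.mem_union.1 he with he | he
      · have := hA _ he
        rw [hδ] at this
        exact Finset.mem_union_left _ this
      · refine Finset.mem_union_right _ (Finset.mem_image.2 ⟨_, he, hδ x⟩)
    refine ⟨a0.image δ, ?_, Finset.card_image_le.trans ha0p, hd.symm, ?_⟩
    · intro e he; obtain ⟨x, hx, rfl⟩ := Finset.mem_image.1 he; exact hD _ (ha0D hx)
    · intro a' ha'D ha'p ha'd
      refine ih _ _ hn (A ∪ a) (B ∪ a0.image δ) ?_ ?_ ?_ a' ha'D ha'p ha'd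
      · intro e he
        rcases Finset.mem_union.1 he with he | he
        · exact Finset.mem_union_left _ (hA _ he)
        · exact Finset.mem_union_right _ (Finset.mem_image_of_mem _ he)
      · intro e he
        rcases Finset.mem_union.1 he with he | he
        · exact Finset.mem_union_left _ (hA0 _ he)
        · exact Finset.mem_union_right _ (Finset.mem_image_of_mem _ he)
      · exact Finset.disjoint_union_right.2 ⟨Finset.disjoint_union_left.2 ⟨hAB, haB⟩, hd⟩

lemma SN_all {win : Finset Edge → Prop} (hw : ∀ A A', A ⊆ A' → win A → win A')
    {D : Finset Edge} {p : ℕ} (δ : Edge → Edge) (hδ : ∀ e, δ (δ e) = e)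
    (hD : ∀ e ∈ D, δ e ∈ D)
    (hnb : ∀ A B, win A → win (B.image δ) → ¬ Disjoint A B) (N : ℕ) :
    SN win D p N ∅ ∅ := by
  by_contra h
  refine h ?_
  have := steal hw δ hδ hD hnb N ∅ ∅ h ∅ ∅ (by simp) (by simp) (by simp) ∅ (by simp) (by simp)
    (by simp)
  simpa using this

/-! ### Generic strategy construction -/

def Leg (board : Set Edge) (C : Finset Edge) (k : ℕ) (mv : Finset Edge) : Prop :=
  (↑mv : Set Edge) ⊆ board \ ↑C ∧
    (mv.card = k ∨ (mv.card < k ∧ board \ ↑C ⊆ (↑mv : Set Edge)))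

lemma altUnion_append (h l : List (Finset Edge)) : ∀ b : Bool,
    altUnion b (h ++ l) = altUnion b h ∪ altUnion (xor b (decide (h.length % 2 = 1))) l := by
  induction h with
  | nil => intro b; simp [altUnion]
  | cons x h ih =>
    intro b
    have hl : (decide ((x :: h).length % 2 = 1)) = !(decide (h.length % 2 = 1)) := by
      rw [← decide_not]; simp only [List.length_cons]; congr 1; simp; omega
    rw [hl]
    cases b
    · simp [altUnion, ih]
    · simp [altUnion, ih]

lemma allClaimed_eq (h : List (Finset Edge)) :
    allClaimed h = altUnion true h ∪ altUnion false h := by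
  induction h with
  | nil => simp [allClaimed, altUnion]
  | cons x h ih =>
    have : allClaimed (x :: h) = x ∪ allClaimed h := rfl
    rw [this, ih]
    simp only [altUnion]
    rw [Finset.union_assoc, Finset.union_comm (altUnion true h)]

lemma hist_length (σ τ : Strategy) (t : ℕ) : (hist σ τ t).length = 2 * t := by
  induction t with
  | zero => rfl
  | succ t ih => simp [hist, ih]; ring

lemma breaker_of_inv (board : Set Edge) (win : Set Edge → Prop) (p q : ℕ)
    (hw : ∀ A B, A ⊆ B → win A → win B)
    (J : Finset Edge → Finset Edge → Prop)
    (h0 : ∀ mv, Leg board ∅ p mv → ∃ mv', Leg board mv q mv' ∧ J mv mv')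
    (h1 : ∀ A B, J A B → ∀ mv, Leg board (A ∪ B) p mv →
      ∃ mv', Leg board (A ∪ B ∪ mv) q mv' ∧ J (A ∪ mv) (B ∪ mv'))
    (hJ : ∀ A B, J A B → ¬ win ↑A) : BreakerWins board win p q := by
  classical
  let good : List (Finset Edge) → Finset Edge → Prop := fun h mv =>
    LegalMove board h q mv ∧ J (altUnion true h) (altUnion false h ∪ mv)
  refine ⟨fun h => if hh : ∃ mv, good h mv then hh.choose else ∅, fun σ hσ => ?_⟩
  set τ : Strategy := fun h => if hh : ∃ mv, good h mv then hh.choose else ∅ with hτ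
  have hτ' : ∀ h, (∃ mv, good h mv) → good h (τ h) := by
    intro h hh
    simp only [hτ, dif_pos hh]
    exact hh.choose_spec
  have e1 : ∀ t x, altUnion true (hist σ τ t ++ [x]) = altUnion true (hist σ τ t) ∪ x := by
    intro t x; rw [altUnion_append, hist_length]; simp [altUnion]
  have e2 : ∀ t x, altUnion false (hist σ τ t ++ [x]) = altUnion false (hist σ τ t) := by
    intro t x; rw [altUnion_append, hist_length]; simp [altUnion]
  have e3 : ∀ t, altUnion true (hist σ τ (t+1)) = altUnion true (hist σ τ t) ∪ σ (hist σ τ t) := by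
    intro t; rw [hist, altUnion_append, hist_length]; simp [altUnion]
  have e4 : ∀ t, altUnion false (hist σ τ (t+1)) =
      altUnion false (hist σ τ t) ∪ τ (hist σ τ t ++ [σ (hist σ τ t)]) := by
    intro t; rw [hist, altUnion_append, hist_length]; simp [altUnion]
  have main : ∀ t, good (hist σ τ t ++ [σ (hist σ τ t)]) (τ (hist σ τ t ++ [σ (hist σ τ t)])) := by
    intro t
    apply hτ'
    induction t with
    | zero =>
      obtain ⟨mv', hl, hj⟩ := h0 (σ []) (by simpa [LegalMove, Leg, allClaimed, hist] using hσ 0)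
      refine ⟨mv', ?_, ?_⟩
      · simpa [LegalMove, Leg, allClaimed, hist] using hl
      · simpa [hist, altUnion] using hj
    | succ t ih =>
      have g := hτ' _ ih
      have gj := g.2
      rw [e1, e2, ← e3, ← e4] at gj
      obtain ⟨mv', hl, hj⟩ := h1 _ _ gj (σ (hist σ τ (t+1))) (by
        have := hσ (t+1)
        unfold LegalMove at this
        rw [allClaimed_eq] at this
        exact this)
      refine ⟨mv', ?_, ?_⟩
      · unfold LegalMove
        rw [allClaimed_eq, e1, e2, Finset.union_right_comm]
        exact hl
      · rw [e1, e2]; exact hj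
  refine ⟨fun t => (main t).1, fun t hwin => ?_⟩
  have g := (main t).2
  rw [e1, e2, ← e3, ← e4] at g
  refine hJ _ _ g (hw _ _ ?_ hwin)
  rw [e3]
  simp [firstClaimed]

lemma fill {board : Set Edge} (hfin : board.Finite) (C X : Finset Edge) (q : ℕ)
    (hX : (↑X : Set Edge) ⊆ board \ ↑C) (hq : X.card ≤ q) :
    ∃ mv, X ⊆ mv ∧ Leg board C q mv := by
  classical
  have hf : (board \ (↑C : Set Edge)).Finite := hfin.subset Set.sdiff_subset
  have hXF : X ⊆ hf.toFinset := by intro e he; simpa using hX he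
  by_cases h : q ≤ hf.toFinset.card
  · obtain ⟨Y, h1, h2, h3⟩ := Finset.exists_subsuperset_card_eq hXF hq h
    refine ⟨Y, h1, ?_, Or.inl h3⟩
    intro e he; simpa using h2 he
  · refine ⟨hf.toFinset, hXF, ?_, Or.inr ⟨by omega, ?_⟩⟩ <;> simp


/-! ### Paths as functions -/

def FC (m n : ℕ) (S : Set Edge) (L : ℕ) (f : ℕ → Vtx) : Prop :=
  (f 0).1 = 1 ∧ (f L).1 = (m : ℤ) ∧ (∀ i ≤ L, f i ∈ lamVtx m n) ∧
    ∀ i < L, ∃ e ∈ S, joins e (f i) (f (i+1))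

lemma FC_of_has {m n : ℕ} {S : Set Edge} (h : HasCrossing m n S) : ∃ L f, FC m n S L f := by
  obtain ⟨l, ⟨v, hv, hv1⟩, ⟨w, hw, hw1⟩, hl, hc⟩ := h
  have hne : l ≠ [] := by rintro rfl; simp at hv
  have hpos : 0 < l.length := List.length_pos_of_ne_nil hne
  have hg : ∀ i (hi : i < l.length), l.getD i (0,0) = l[i] := by
    intro i hi; simp [List.getD, hi]
  refine ⟨l.length - 1, fun i => l.getD i (0,0), ?_, ?_, ?_, ?_⟩
  · show (l.getD 0 (0,0)).1 = 1
    rw [hg 0 hpos]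
    rw [List.head?_eq_getElem?, List.getElem?_eq_getElem hpos] at hv
    rw [Option.some_inj.1 hv]; exact hv1
  · show (l.getD (l.length - 1) (0,0)).1 = m
    rw [hg _ (by omega)]
    rw [List.getLast?_eq_getElem?, List.getElem?_eq_getElem (by omega)] at hw
    rw [Option.some_inj.1 hw]; exact hw1
  · intro i hi
    show l.getD i (0,0) ∈ _
    rw [hg i (by omega)]
    exact hl _ (List.getElem_mem _)
  · intro i hi
    show ∃ e ∈ S, joins e (l.getD i (0,0)) (l.getD (i+1) (0,0))
    rw [hg i (by omega), hg (i+1) (by omega)]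
    refine hc (l[i]'(by omega), l[i+1]'(by omega)) ?_
    unfold cp
    rw [List.mem_iff_getElem]
    refine ⟨i, ?_, ?_⟩
    · simp; omega
    · simp

lemma has_of_FC {m n : ℕ} {S : Set Edge} {L : ℕ} {f : ℕ → Vtx} (h : FC m n S L f) :
    HasCrossing m n S := by
  obtain ⟨h0, h1, h2, h3⟩ := h
  refine ⟨(List.range (L+1)).map f, ⟨f 0, ?_, h0⟩, ⟨f L, ?_, h1⟩, ?_, ?_⟩
  · simp [List.head?_eq_getElem?]
  · simp [List.getLast?_eq_getElem?]
  · intro v hv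
    simp only [List.mem_map, List.mem_range] at hv
    obtain ⟨i, hi, rfl⟩ := hv
    exact h2 i (by omega)
  · intro q hq
    unfold cp at hq
    rw [List.mem_iff_getElem] at hq
    obtain ⟨i, hi, rfl⟩ := hq
    simp at hi
    obtain ⟨e, he, hj⟩ := h3 i (by omega)
    refine ⟨e, he, ?_⟩
    simpa using hj

lemma has_mono {m n : ℕ} {S T : Set Edge} (h : S ⊆ T) (hc : HasCrossing m n S) :
    HasCrossing m n T := by
  obtain ⟨l, h1, h2, h3, h4⟩ := hc
  refine ⟨l, h1, h2, h3, fun q hq => ?_⟩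
  obtain ⟨e, he, hj⟩ := h4 q hq
  exact ⟨e, h he, hj⟩

lemma joins_true {x y : ℤ} {u v : Vtx} : joins ((x,y),true) u v ↔
    (u.1 = x ∧ u.2 = y ∧ v.1 = x + 1 ∧ v.2 = y) ∨ (v.1 = x ∧ v.2 = y ∧ u.1 = x + 1 ∧ u.2 = y) := by
  obtain ⟨a, b⟩ := u; obtain ⟨c, d⟩ := v
  simp only [joins, ends, Prod.mk.injEq, if_true]
  constructor <;> rintro (h | h) <;> [left; right; left; right] <;> omega

lemma joins_false {x y : ℤ} {u v : Vtx} : joins ((x,y),false) u v ↔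
    (u.1 = x ∧ u.2 = y ∧ v.1 = x ∧ v.2 = y + 1) ∨ (v.1 = x ∧ v.2 = y ∧ u.1 = x ∧ u.2 = y + 1) := by
  obtain ⟨a, b⟩ := u; obtain ⟨c, d⟩ := v
  simp only [joins, ends, Prod.mk.injEq, Bool.false_eq_true, if_false]
  constructor <;> rintro (h | h) <;> [left; right; left; right] <;> omega

/-! ### Duality -/

def dl : Edge → Edge
  | ((x,y),true) => ((y,x),true)
  | ((x,y),false) => ((y+1,x-1),false)

lemma dl_dl (e : Edge) : dl (dl e) = e := by
  obtain ⟨⟨x,y⟩,_|_⟩ := e <;> simp [dl]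

def cr (v a b : Vtx) : ℤ :=
  if a.2 = b.2 ∧ a.2 < v.1 then
    (if a.1 = v.2 ∧ b.1 = v.2 + 1 then 1 else if b.1 = v.2 ∧ a.1 = v.2 + 1 then -1 else 0)
  else 0

lemma no_both {n : ℕ} {A B : Set Edge} (hA : HasCrossing (n+1) n A)
    (hB : HasCrossing (n+1) n (dl '' B)) : ∃ e ∈ A, e ∈ B := by
  by_contra hc
  push Not at hc
  obtain ⟨L, f, f0, fL, fV, fE⟩ := FC_of_has hA
  obtain ⟨K, g, g0, gK, gV, gE⟩ := FC_of_has hB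
  let s : Vtx → ℤ := fun v => ∑ i ∈ Finset.range K, cr v (g i) (g (i+1))
  have hor : ∀ x y : ℤ, ((x,y),true) ∈ A → s (x,y) = s (x+1,y) := by
    intro x y hxy
    refine Finset.sum_congr rfl fun i hi => ?_
    obtain ⟨d, ⟨d', hd', rfl⟩, hj⟩ := gE i (Finset.mem_range.1 hi)
    obtain ⟨⟨x',y'⟩,_|_⟩ := d'
    · simp only [dl, joins_false] at hj
      unfold cr; split_ifs <;> simp only at * <;> omega
    · have hne : ¬ (x' = x ∧ y' = y) := by
        rintro ⟨rfl, rfl⟩; exact hc _ hxy hd'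
      simp only [dl, joins_true] at hj
      unfold cr; split_ifs <;> simp only at * <;> omega
  have ver : ∀ x y : ℤ, 1 ≤ y → y + 1 ≤ n → ((x,y),false) ∈ A → s (x,y) = s (x,y+1) := by
    intro x y hy1 hyn hxy
    let t : Vtx → ℤ := fun w => if w.1 = y + 1 ∧ w.2 < x then 1 else 0
    have : s (x,y) - s (x,y+1) = t (g K) - t (g 0) := by
      rw [← Finset.sum_range_sub (fun i => t (g i)), ← Finset.sum_sub_distrib]
      refine Finset.sum_congr rfl fun i hi => ?_
      obtain ⟨d, ⟨d', hd', rfl⟩, hj⟩ := gE i (Finset.mem_range.1 hi)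
      obtain ⟨⟨x',y'⟩,_|_⟩ := d'
      · have hne : ¬ (x' = x ∧ y' = y) := by
          rintro ⟨rfl, rfl⟩; exact hc _ hxy hd'
        simp only [dl, joins_false] at hj
        simp only [cr, t]
        split_ifs <;> omega
      · simp only [dl, joins_true] at hj
        simp only [cr, t]
        split_ifs <;> omega
    have h1 : t (g K) = 0 := by simp only [t]; rw [if_neg]; rw [gK]; push_cast; omega
    have h2 : t (g 0) = 0 := by simp only [t]; rw [if_neg]; rw [g0]; omega
    omega
  have const : ∀ i ≤ L, s (f i) = s (f 0) := by
    intro i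
    induction i with
    | zero => intro _; rfl
    | succ i ih =>
      intro hi
      rw [← ih (by omega)]
      obtain ⟨e, he, hj⟩ := fE i (by omega)
      have v1 := fV i (by omega)
      have v2 := fV (i+1) (by omega)
      simp only [lamVtx, Set.mem_ofPred_eq] at v1 v2
      obtain ⟨⟨x,y⟩,_|_⟩ := e
      · rw [joins_false] at hj
        rcases hj with h | h
        · have a1 : f i = (x,y) := Prod.ext h.1 h.2.1
          have a2 : f (i+1) = (x,y+1) := Prod.ext h.2.2.1 h.2.2.2
          rw [a1, a2]; exact (ver x y (by omega) (by omega) he).symm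
        · have a1 : f (i+1) = (x,y) := Prod.ext h.1 h.2.1
          have a2 : f i = (x,y+1) := Prod.ext h.2.2.1 h.2.2.2
          rw [a1, a2]; exact (ver x y (by omega) (by omega) he)
      · rw [joins_true] at hj
        rcases hj with h | h
        · have a1 : f i = (x,y) := Prod.ext h.1 h.2.1
          have a2 : f (i+1) = (x+1,y) := Prod.ext h.2.2.1 h.2.2.2
          rw [a1, a2]; exact (hor x y he).symm
        · have a1 : f (i+1) = (x,y) := Prod.ext h.1 h.2.1
          have a2 : f i = (x+1,y) := Prod.ext h.2.2.1 h.2.2.2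
          rw [a1, a2]; exact (hor x y he)
  have l0 : s (f 0) = 0 := by
    refine Finset.sum_eq_zero fun i hi => ?_
    have := gV i (by have := Finset.mem_range.1 hi; omega)
    simp only [lamVtx, Set.mem_ofPred_eq] at this
    unfold cr
    rw [if_neg]; rw [f0]; omega
  have l1 : s (f L) = 1 := by
    have v1 := fV L le_rfl
    simp only [lamVtx, Set.mem_ofPred_eq] at v1
    let t : Vtx → ℤ := fun w => if (f L).2 + 1 ≤ w.1 then 1 else 0
    have : s (f L) = t (g K) - t (g 0) := by
      rw [← Finset.sum_range_sub (fun i => t (g i))]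
      refine Finset.sum_congr rfl fun i hi => ?_
      obtain ⟨d, ⟨d', hd', rfl⟩, hj⟩ := gE i (Finset.mem_range.1 hi)
      have w := gV i (by have := Finset.mem_range.1 hi; omega)
      simp only [lamVtx, Set.mem_ofPred_eq] at w
      push_cast at fL
      obtain ⟨⟨x',y'⟩,_|_⟩ := d'
      · simp only [dl, joins_false] at hj
        simp only [cr, t]
        split_ifs <;> omega
      · simp only [dl, joins_true] at hj
        simp only [cr, t]
        split_ifs <;> omega
    have h1 : t (g K) = 1 := by simp only [t]; rw [if_pos]; rw [gK]; push_cast; omega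
    have h2 : t (g 0) = 0 := by simp only [t]; rw [if_neg]; rw [g0]; omega
    omega
  have := const L le_rfl
  omega


/-! ### Boards -/

lemma mem_sE_true {m n : ℕ} {x y : ℤ} : ((x,y),true) ∈ sEdges m n ↔
    1 ≤ x ∧ x + 1 ≤ m ∧ 1 ≤ y ∧ y ≤ n := by
  simp only [sEdges, lamEdges, lamVtx, ends, Set.mem_ofPred_eq, if_true]
  simp
  omega

lemma mem_sE_false {m n : ℕ} {x y : ℤ} : ((x,y),false) ∈ sEdges m n ↔
    2 ≤ x ∧ x + 1 ≤ m ∧ 1 ≤ y ∧ y + 1 ≤ n := by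
  simp only [sEdges, lamEdges, lamVtx, ends, Set.mem_ofPred_eq]
  simp
  omega

lemma sE_fin (m n : ℕ) : (sEdges m n).Finite := by
  refine ((((Finset.Icc (1:ℤ) m) ×ˢ (Finset.Icc (1:ℤ) n)) ×ˢ
    (Finset.univ : Finset Bool)).finite_toSet).subset ?_
  rintro ⟨⟨x,y⟩,_|_⟩ h
  · rw [mem_sE_false] at h; simp; omega
  · rw [mem_sE_true] at h; simp; omega

noncomputable def dE (n : ℕ) : Finset Edge := (sE_fin (n+1) n).toFinset

lemma mem_dE {n : ℕ} {e : Edge} : e ∈ dE n ↔ e ∈ sEdges (n+1) n := by simp [dE]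

lemma dl_mem {n : ℕ} (e : Edge) (h : e ∈ dE n) : dl e ∈ dE n := by
  rw [mem_dE] at *
  obtain ⟨⟨x,y⟩,_|_⟩ := e
  · rw [mem_sE_false] at h; simp only [dl, mem_sE_false]; push_cast at *; omega
  · rw [mem_sE_true] at h; simp only [dl, mem_sE_true]; push_cast at *; omega

def sh (o : ℤ) (e : Edge) : Edge := ((e.1.1 + o, e.1.2), e.2)

lemma sh_inj (o : ℤ) : Function.Injective (sh o) := by
  rintro ⟨⟨x,y⟩,b⟩ ⟨⟨x',y'⟩,b'⟩ h
  simpa [sh] using h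

lemma sh_mem {m n : ℕ} {o : ℤ} (h0 : 0 ≤ o) (h1 : o + n + 1 ≤ m) {e : Edge}
    (h : e ∈ sEdges (n+1) n) : sh o e ∈ sEdges m n := by
  obtain ⟨⟨x,y⟩,_|_⟩ := e
  · rw [mem_sE_false] at h; simp only [sh, mem_sE_false]; push_cast at *; omega
  · rw [mem_sE_true] at h; simp only [sh, mem_sE_true]; push_cast at *; omega

lemma ivt (g : ℕ → ℤ) (c : ℤ) (h0 : g 0 ≤ c) : ∀ L, c < g L → ∃ i < L, g i ≤ c ∧ c < g (i+1) := by
  intro L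
  induction L with
  | zero => intro h; omega
  | succ L ih =>
    intro h
    by_cases hL : c < g L
    · obtain ⟨i, hi, h⟩ := ih hL; exact ⟨i, by omega, h⟩
    · exact ⟨L, by omega, by omega, h⟩

lemma joins_step {e : Edge} {u v : Vtx} (h : joins e u v) : u.1 ≤ v.1 + 1 ∧ v.1 ≤ u.1 + 1 := by
  obtain ⟨⟨x,y⟩,_|_⟩ := e
  · rw [joins_false] at h; omega
  · rw [joins_true] at h; omega

lemma block {m n : ℕ} (hn : 1 ≤ n) {o : ℤ} (h0 : 0 ≤ o) (h1 : o + n + 1 ≤ m) {S : Set Edge}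
    (h : HasCrossing m n S) : HasCrossing (n+1) n {e | e ∈ sEdges (n+1) n ∧ sh o e ∈ S} := by
  classical
  obtain ⟨L, f, f0, fL, fV, fE⟩ := FC_of_has h
  have step : ∀ i < L, (f i).1 ≤ (f (i+1)).1 + 1 ∧ (f (i+1)).1 ≤ (f i).1 + 1 := by
    intro i hi; obtain ⟨e, _, hj⟩ := fE i hi; exact joins_step hj
  have hex : ∃ j, o + n + 1 ≤ (f j).1 := ⟨L, by omega⟩
  obtain ⟨j, hj1, hj2⟩ : ∃ j, o + n + 1 ≤ (f j).1 ∧ ∀ i < j, (f i).1 < o + n + 1 :=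
    ⟨Nat.find hex, Nat.find_spec hex, fun i hi => not_le.1 (Nat.find_min hex hi)⟩
  have hjL : j ≤ L := by
    by_contra hc; have := hj2 L (by omega); omega
  have hj0 : j ≠ 0 := by rintro rfl; omega
  have hjeq : (f j).1 = o + n + 1 := by
    have a := hj2 (j-1) (by omega)
    have b := step (j-1) (by omega)
    rw [show j - 1 + 1 = j by omega] at b
    omega
  obtain ⟨i, hij, hi1, hi2⟩ : ∃ i, i ≤ j ∧ (f i).1 ≤ o + 1 ∧ ∀ t, i < t → t ≤ j → o + 1 < (f t).1 := by
    refine ⟨Nat.findGreatest (fun i => (f i).1 ≤ o + 1) j, Nat.findGreatest_le _, ?_, ?_⟩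
    · exact Nat.findGreatest_spec (P := fun i => (f i).1 ≤ o + 1) (Nat.zero_le j) (by omega)
    · intro t ht htj
      exact not_le.1 (Nat.findGreatest_is_greatest ht htj)
  have hlt : i < j := by
    rcases hij.lt_or_eq with h | h
    · exact h
    · subst h; omega
  have hieq : (f i).1 = o + 1 := by
    have a := hi2 (i+1) (by omega) (by omega)
    have b := step i (by omega)
    omega
  refine has_of_FC (L := j - i) (f := fun t => ((f (i+t)).1 - o, (f (i+t)).2)) ⟨?_, ?_, ?_, ?_⟩
  · show (f (i+0)).1 - o = 1
    rw [add_zero]; omega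
  · show (f (i+(j-i))).1 - o = _
    rw [show i + (j - i) = j by omega]; push_cast; omega
  · intro t ht
    have v := fV (i+t) (by omega)
    simp only [lamVtx, Set.mem_ofPred_eq] at v ⊢
    have a : o + 1 ≤ (f (i+t)).1 := by
      rcases Nat.eq_zero_or_pos t with rfl | h
      · rw [add_zero]; omega
      · have := hi2 (i+t) (by omega) (by omega); omega
    have b : (f (i+t)).1 ≤ o + n + 1 := by
      rcases (show i + t ≤ j by omega).lt_or_eq with h | h
      · have := hj2 _ h; omega
      · rw [h]; omega
    push_cast; omega
  · intro t ht
    obtain ⟨e, he, hje⟩ := fE (i+t) (by omega)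
    have a : o + 1 ≤ (f (i+t)).1 := by
      rcases Nat.eq_zero_or_pos t with rfl | h
      · rw [add_zero]; omega
      · have := hi2 (i+t) (by omega) (by omega); omega
    have a' := hi2 (i+t+1) (by omega) (by omega)
    have b := hj2 (i+t) (by omega)
    have b' : (f (i+t+1)).1 ≤ o + n + 1 := by
      rcases (show i + t + 1 ≤ j by omega).lt_or_eq with h | h
      · have := hj2 _ h; omega
      · rw [h]; omega
    have v := fV (i+t) (by omega)
    have v' := fV (i+t+1) (by omega)
    simp only [lamVtx, Set.mem_ofPred_eq] at v v'
    refine ⟨sh (-o) e, ⟨?_, ?_⟩, ?_⟩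
    · obtain ⟨⟨x,y⟩,_|_⟩ := e
      · rw [joins_false] at hje; simp only [sh, mem_sE_false]; push_cast; omega
      · rw [joins_true] at hje; simp only [sh, mem_sE_true]; push_cast; omega
    · have : sh o (sh (-o) e) = e := by obtain ⟨⟨x,y⟩,b⟩ := e; simp [sh]
      rw [this]; exact he
    · show joins _ (_, _) ((f (i+(t+1))).1 - o, (f (i+(t+1))).2)
      rw [← add_assoc]
      obtain ⟨⟨x,y⟩,_|_⟩ := e
      · rw [joins_false] at hje; simp only [sh, joins_false]; omega
      · rw [joins_true] at hje; simp only [sh, joins_true]; omega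

/-! ### Neutralising Maker's first edges -/

def adjE : Edge → Finset Edge
  | ((x,y),true) => {((x-1,y),true), ((x,y),false), ((x,y-1),false), ((x+1,y),true),
      ((x+1,y),false), ((x+1,y-1),false)}
  | ((x,y),false) => {((x,y-1),false), ((x-1,y),true), ((x,y),true), ((x,y+1),false),
      ((x-1,y+1),true), ((x,y+1),true)}

lemma adjE_card (e : Edge) : (adjE e).card ≤ 6 := by
  obtain ⟨⟨x,y⟩,_|_⟩ := e
  · exact Finset.card_le_six
  · exact Finset.card_le_six

lemma adjE_mem {e e' : Edge} {u v w : Vtx} (h : joins e u v) (h' : joins e' v w) (hne : u ≠ w) :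
    e' ∈ adjE e := by
  obtain ⟨u1, u2⟩ := u
  obtain ⟨w1, w2⟩ := w
  have hne : ¬ (u1 = w1 ∧ u2 = w2) := by rintro ⟨rfl, rfl⟩; exact hne rfl
  obtain ⟨⟨x,y⟩,_|_⟩ := e <;> obtain ⟨⟨x',y'⟩,_|_⟩ := e' <;>
    simp only [joins_false, joins_true] at h h' <;>
    simp only [adjE, Finset.mem_insert, Finset.mem_singleton, Prod.mk.injEq, reduceCtorEq,
      and_true, and_false, false_or, or_false] <;> omega

lemma joins_symm {e : Edge} {u v : Vtx} (h : joins e u v) : joins e v u := Or.symm h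

lemma joins_eq {e : Edge} {u v u' v' : Vtx} (h : joins e u v) (h' : joins e u' v') :
    (u = u' ∧ v = v') ∨ (u = v' ∧ v = u') := by
  rcases h with ⟨rfl, rfl⟩ | ⟨rfl, rfl⟩ <;> rcases h' with ⟨rfl, rfl⟩ | ⟨rfl, rfl⟩ <;> simp

lemma joins_ne {e : Edge} {u v : Vtx} (h : joins e u v) : u ≠ v := by
  rintro rfl
  obtain ⟨⟨x,y⟩,_|_⟩ := e
  · rw [joins_false] at h; omega
  · rw [joins_true] at h; omega

lemma pickN (K : Finset Edge) (hK : K.card ≤ 6) : ∃ N ⊆ K, N.card ≤ 5 ∧ (K.card ≤ 5 → N = K) ∧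
    ∀ a ∈ K, ∀ b ∈ K, a ∉ N → b ∉ N → a = b := by
  by_cases h : K.card ≤ 5
  · exact ⟨K, subset_rfl, h, fun _ => rfl, fun a ha b hb h1 _ => absurd ha h1⟩
  · have : K.Nonempty := Finset.card_pos.1 (by omega)
    obtain ⟨z, hz⟩ := this
    refine ⟨K.erase z, Finset.erase_subset _ _, by rw [Finset.card_erase_of_mem hz]; omega,
      fun h' => absurd h' h, fun a ha b hb h1 h2 => ?_⟩
    simp [ha] at h1; simp [hb] at h2; rw [h1, h2]

lemma neutral {n r : ℕ} (hr : r < n) (hn : 2 ≤ n) (M : Finset Edge) (hM : M.card ≤ r) :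
    ∃ N : Finset Edge, N ⊆ dE n \ M ∧ N.card ≤ 5 * r ∧ ∀ X : Set Edge, X ⊆ sEdges (n+1) n →
      (∀ e ∈ X, e ∉ N) → HasCrossing (n+1) n X → HasCrossing (n+1) n (X \ ↑M) := by
  classical
  let K : Edge → Finset Edge := fun e => (adjE e ∩ dE n) \ M
  have hK : ∀ e, (K e).card ≤ 6 := fun e =>
    (Finset.card_le_card (Finset.sdiff_subset.trans Finset.inter_subset_left)).trans (adjE_card e)
  choose F hF1 hF2 hF3 hF4 using fun e => pickN (K e) (hK e)
  refine ⟨M.biUnion F, ?_, ?_, ?_⟩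
  · intro e he
    obtain ⟨a, _, ha⟩ := Finset.mem_biUnion.1 he
    have := hF1 a ha
    simp only [K, Finset.mem_sdiff, Finset.mem_inter] at this ⊢
    exact ⟨this.1.2, this.2⟩
  · calc _ ≤ M.card * 5 := Finset.card_biUnion_le_card_mul _ _ _ (fun e _ => hF2 e)
      _ ≤ 5 * r := by omega
  intro X hX hXN hc
  have hex : ∃ L, ∃ f, FC (n+1) n X L f := FC_of_has hc
  obtain ⟨L, ⟨f, hf⟩, hmin⟩ : ∃ L, (∃ f, FC (n+1) n X L f) ∧ ∀ L' < L, ¬ ∃ f, FC (n+1) n X L' f :=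
    ⟨Nat.find hex, Nat.find_spec hex, fun i hi => Nat.find_min hex hi⟩
  obtain ⟨f0, fL, fV, fE⟩ := hf
  have hne : ∀ j, j + 2 ≤ L → f j ≠ f (j+2) := by
    intro j hj heq
    refine hmin (L - 2) (by omega) ⟨fun i => if i ≤ j then f i else f (i+2), ?_, ?_, ?_, ?_⟩
    · simpa using f0
    · show (if L - 2 ≤ j then f (L-2) else f (L-2+2)).1 = _
      split_ifs with h
      · have : L - 2 = j := by omega
        rw [this, heq, show j + 2 = L by omega]; exact fL
      · rw [show L - 2 + 2 = L by omega]; exact fL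
    · intro i hi
      show (if i ≤ j then f i else f (i+2)) ∈ _
      split_ifs
      · exact fV i (by omega)
      · exact fV (i+2) (by omega)
    · intro i hi
      show ∃ e ∈ X, joins e (if i ≤ j then f i else f (i+2)) (if i + 1 ≤ j then f (i+1) else f (i+1+2))
      split_ifs with h1 h2
      · exact fE i (by omega)
      · have : i = j := by omega
        subst this
        rw [heq]; exact fE (i+2) (by omega)
      · omega
      · exact fE (i+2) (by omega)
  have hE : ∀ i, ∃ e, i < L → e ∈ X ∧ joins e (f i) (f (i+1)) := by
    intro i
    by_cases hi : i < L
    · obtain ⟨e, h⟩ := fE i hi; exact ⟨e, fun _ => h⟩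
    · exact ⟨((0,0),true), fun h => absurd h hi⟩
  choose E hE using hE
  have hLn : n ≤ L := by
    have : ∀ i ≤ L, (f i).1 ≤ 1 + i := by
      intro i
      induction i with
      | zero => intro _; omega
      | succ i ih =>
        intro hi
        have a := ih (by omega)
        have b := joins_step (hE i (by omega)).2
        push_cast; omega
    have a := this L le_rfl
    push_cast at fL
    omega
  have hXK : ∀ e ∈ M, ∀ e' ∈ X, e' ∈ adjE e → e' ∉ M → e' ∈ K e ∧ e' ∉ F e := by
    intro e he e' he' ha hm
    refine ⟨?_, fun h => hXN e' he' (Finset.mem_biUnion.2 ⟨e, he, h⟩)⟩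
    simp only [K, Finset.mem_sdiff, Finset.mem_inter, mem_dE]
    exact ⟨⟨ha, hX he'⟩, hm⟩
  have hXK5 : ∀ e ∈ M, (K e).card ≤ 5 → ∀ e' ∈ X, e' ∈ adjE e → e' ∈ M := by
    intro e he h5 e' he' ha
    by_contra hm
    have := hXK e he e' he' ha hm
    rw [hF3 e h5] at this
    exact this.2 this.1
  have hK5 : ∀ e, (∃ a ∈ adjE e, a ∉ dE n ∨ a ∈ M) → (K e).card ≤ 5 := by
    rintro e ⟨a, ha, ha'⟩
    have : K e ⊆ (adjE e).erase a := by
      intro b hb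
      simp only [K, Finset.mem_sdiff, Finset.mem_inter] at hb
      refine Finset.mem_erase.2 ⟨?_, hb.1.1⟩
      rintro rfl
      rcases ha' with h | h
      · exact h hb.1.2
      · exact hb.2 h
    have h1 := Finset.card_le_card this
    rw [Finset.card_erase_of_mem ha] at h1
    have := adjE_card e
    omega
  have next_adj : ∀ i, i + 1 < L → E (i+1) ∈ adjE (E i) := by
    intro i hi
    exact adjE_mem (hE i (by omega)).2 (hE (i+1) hi).2 (hne i (by omega))
  have prev_adj : ∀ i, i + 1 < L → E i ∈ adjE (E (i+1)) := by
    intro i hi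
    exact adjE_mem (joins_symm (hE (i+1) hi).2) (joins_symm (hE i (by omega)).2)
      (hne i (by omega)).symm
  have mid : ∀ i, i + 2 < L → E (i+1) ∈ M → E i ∈ M ∧ E (i+2) ∈ M := by
    intro i hi hm
    have a1 := prev_adj i (by omega)
    have a2 := next_adj (i+1) (by omega)
    have x1 := (hE i (by omega)).1
    have x2 := (hE (i+2) (by omega)).1
    by_cases h1 : E i ∈ M
    · exact ⟨h1, hXK5 _ hm (hK5 _ ⟨_, a1, Or.inr h1⟩) _ x2 a2⟩
    by_cases h2 : E (i+2) ∈ M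
    · exact ⟨hXK5 _ hm (hK5 _ ⟨_, a2, Or.inr h2⟩) _ x1 a1, h2⟩
    exfalso
    have k1 := hXK _ hm _ x1 a1 h1
    have k2 := hXK _ hm _ x2 a2 h2
    have heq := hF4 _ _ k1.1 _ k2.1 k1.2 k2.2
    have j1 := (hE i (by omega)).2
    have j2 := (hE (i+2) (by omega)).2
    rw [heq] at j1
    rcases joins_eq j1 j2 with h | h
    · exact hne i (by omega) h.1
    · exact joins_ne (hE (i+1) (by omega)).2 h.2
  have first : E 0 ∈ M → E 1 ∈ M := by
    intro hm
    refine hXK5 _ hm (hK5 _ ?_) _ (hE 1 (by omega)).1 (next_adj 0 (by omega))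
    have hx := hX (hE 0 (by omega)).1
    have hj := (hE 0 (by omega)).2
    generalize E 0 = e at hx hj
    obtain ⟨⟨x,y⟩,_|_⟩ := e
    · rw [mem_sE_false] at hx; rw [joins_false] at hj; omega
    · rw [mem_sE_true] at hx; rw [joins_true] at hj
      refine ⟨((x-1,y),true), by simp [adjE], Or.inl ?_⟩
      rw [mem_dE, mem_sE_true]; omega
  have last : E (L-1) ∈ M → E (L-2) ∈ M := by
    intro hm
    have hp := prev_adj (L-2) (by omega)
    rw [show L - 2 + 1 = L - 1 by omega] at hp
    refine hXK5 _ hm (hK5 _ ?_) _ (hE (L-2) (by omega)).1 hp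
    have hx := hX (hE (L-1) (by omega)).1
    have hj := (hE (L-1) (by omega)).2
    rw [show L - 1 + 1 = L by omega] at hj
    generalize E (L-1) = e at hx hj
    push_cast at fL
    obtain ⟨⟨x,y⟩,_|_⟩ := e
    · rw [mem_sE_false] at hx; rw [joins_false] at hj; push_cast at hx; omega
    · rw [mem_sE_true] at hx; rw [joins_true] at hj; push_cast at hx
      refine ⟨((x+1,y),true), by simp [adjE], Or.inl ?_⟩
      rw [mem_dE, mem_sE_true]; push_cast; omega
  have fwd : ∀ i, i + 1 < L → E i ∈ M → E (i+1) ∈ M := by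
    intro i hi hm
    rcases i with _ | i
    · exact first hm
    · exact (mid i (by omega) hm).2
  have bwd : ∀ i, i + 1 < L → E (i+1) ∈ M → E i ∈ M := by
    intro i hi hm
    by_cases h : i + 2 < L
    · exact (mid i h hm).1
    · have : L = i + 2 := by omega
      subst this
      exact last hm
  have all0 : ∀ i < L, E i ∈ M → E 0 ∈ M := by
    intro i
    induction i with
    | zero => exact fun _ h => h
    | succ i ih => exact fun hi h => ih (by omega) (bwd i hi h)
  have allF : E 0 ∈ M → ∀ i < L, E i ∈ M := by
    intro h0 i
    induction i with
    | zero => exact fun _ => h0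
    | succ i ih => exact fun hi => fwd i hi (ih (by omega))
  have none : ∀ i < L, E i ∉ M := by
    intro i hi hm
    have hall := allF (all0 i hi hm)
    have hsub : Finset.Icc (1:ℤ) n ⊆ M.image (fun e => e.1.1) := by
      intro c hc
      rw [Finset.mem_Icc] at hc
      obtain ⟨j, hj, h1, h2⟩ := ivt (fun i => (f i).1) c (by omega) L
        (by rw [fL]; push_cast; omega)
      refine Finset.mem_image.2 ⟨E j, hall j hj, ?_⟩
      have hh := (hE j hj).2
      generalize E j = e at hh
      obtain ⟨⟨x,y⟩,_|_⟩ := e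
      · rw [joins_false] at hh; simp only; omega
      · rw [joins_true] at hh; simp only; omega
    have h1 := (Finset.card_le_card hsub).trans Finset.card_image_le
    rw [Int.card_Icc] at h1
    omega
  refine has_of_FC (L := L) (f := f) ⟨f0, fL, fV, fun i hi => ⟨E i, ⟨(hE i hi).1, ?_⟩, (hE i hi).2⟩⟩
  exact_mod_cast none i hi


/-! ### The main invariant -/

def wn (n : ℕ) (A : Finset Edge) : Prop := HasCrossing (n+1) n (↑A : Set Edge)

noncomputable def loc (n : ℕ) (o : ℤ) (X : Finset Edge) : Finset Edge :=
  (dE n).filter (fun e => sh o e ∈ X)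

lemma mem_loc {n : ℕ} {o : ℤ} {X : Finset Edge} {e : Edge} :
    e ∈ loc n o X ↔ e ∈ dE n ∧ sh o e ∈ X := by simp [loc]

lemma wn_mono (n : ℕ) (A A' : Finset Edge) (h : A ⊆ A') (hw : wn n A) : wn n A' :=
  has_mono (by exact_mod_cast h) hw

lemma SN_start (n p N : ℕ) : SN (wn n) (dE n) p N ∅ ∅ := by
  refine SN_all (wn_mono n) dl dl_dl dl_mem (fun A B hA hB hd => ?_) N
  unfold wn at hB
  rw [Finset.coe_image] at hB
  obtain ⟨e, h1, h2⟩ := no_both hA hB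
  exact Finset.disjoint_left.1 hd (by exact_mod_cast h1) (by exact_mod_cast h2)

structure Pre (m n r : ℕ) (o : ℤ) (M0 N A B : Finset Edge) : Prop where
  o0 : 0 ≤ o
  o1 : o + n + 1 ≤ m
  M0A : M0 ⊆ A
  ND : N ⊆ dE n
  Nc : N.card ≤ 5 * r
  NA : ∀ e ∈ N, sh o e ∉ A
  neu : ∀ X : Set Edge, X ⊆ sEdges (n+1) n → (∀ e ∈ X, e ∉ N) → HasCrossing (n+1) n X →
    HasCrossing (n+1) n (X \ ↑(loc n o M0))
  dis : Disjoint A B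

def Jinv (m n p r : ℕ) (A B : Finset Edge) : Prop :=
  ∃ o M0 N, Pre m n r o M0 N A B ∧ (∀ e ∈ N, sh o e ∈ B) ∧
    ∀ a : Finset Edge, a ⊆ dE n → a.card ≤ p → Disjoint a (loc n o (B ∪ M0)) →
      ∀ k, SN (wn n) (dE n) p k (loc n o (A \ M0) ∪ a) (loc n o (B ∪ M0))

lemma core {m n p r : ℕ} {o : ℤ} {M0 N A B : Finset Edge} (h : Pre m n r o M0 N A B)
    (hS : ∀ k, SN (wn n) (dE n) p k (loc n o (A \ M0)) (loc n o (B ∪ M0))) :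
    ∃ mv', Leg (sEdges m n) (A ∪ B) (p + 5 * r) mv' ∧ Jinv m n p r A (B ∪ mv') := by
  classical
  obtain ⟨b, hbD, hbp, hbA, hb⟩ := SN_inf hS
  obtain ⟨mv, hX, hl⟩ := fill (sE_fin m n) (A ∪ B) ((b ∪ N).image (sh o) \ (A ∪ B)) (p + 5 * r)
    (by
      intro e he
      rw [Finset.coe_sdiff] at he
      refine ⟨?_, he.2⟩
      obtain ⟨x, hx, rfl⟩ := Finset.mem_image.1 (Finset.mem_coe.1 he.1)
      refine sh_mem h.o0 h.o1 (mem_dE.1 ?_)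
      rcases Finset.mem_union.1 hx with hx | hx
      · exact hbD hx
      · exact h.ND hx)
    (by
      refine (Finset.card_le_card Finset.sdiff_subset).trans (Finset.card_image_le.trans ?_)
      refine (Finset.card_union_le _ _).trans ?_
      have := h.Nc
      omega)
  have hmvA : Disjoint A mv := by
    rw [Finset.disjoint_left]
    intro e he he'
    exact (hl.1 (Finset.mem_coe.2 he')).2 (Finset.mem_coe.2 (Finset.mem_union_left _ he))
  refine ⟨mv, hl, o, M0, N, ⟨h.o0, h.o1, h.M0A, h.ND, h.Nc, h.NA, h.neu, ?_⟩, ?_, ?_⟩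
  · exact Finset.disjoint_union_right.2 ⟨h.dis, hmvA⟩
  · intro e he
    by_cases hB : sh o e ∈ B
    · exact Finset.mem_union_left _ hB
    · refine Finset.mem_union_right _ (hX ?_)
      refine Finset.mem_sdiff.2 ⟨Finset.mem_image_of_mem _ (Finset.mem_union_right _ he), ?_⟩
      simp [hB, h.NA e he]
  · have hsub : loc n o (B ∪ M0) ∪ b ⊆ loc n o (B ∪ mv ∪ M0) := by
      intro e he
      rcases Finset.mem_union.1 he with he | he
      · rw [mem_loc] at he ⊢
        refine ⟨he.1, ?_⟩
        have := he.2
        simp only [Finset.mem_union] at this ⊢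
        tauto
      · rw [mem_loc]
        refine ⟨hbD he, ?_⟩
        have hnA : ¬ (sh o e ∈ A ∧ sh o e ∉ M0) := by
          intro hh
          refine Finset.disjoint_left.1 hbA he (mem_loc.2 ⟨hbD he, ?_⟩)
          exact Finset.mem_sdiff.2 hh
        by_cases hAB : sh o e ∈ A ∪ B
        · simp only [Finset.mem_union] at hAB ⊢
          tauto
        · have : sh o e ∈ mv := hX (Finset.mem_sdiff.2
            ⟨Finset.mem_image_of_mem _ (Finset.mem_union_left _ he), hAB⟩)
          simp [this]
    intro a haD hap had k
    exact SN_mono (wn_mono n) k _ _ _ _ subset_rfl hsub (hb a haD hap (had.mono_right hsub) k)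

lemma Leg.card_le {board : Set Edge} {C mv : Finset Edge} {k : ℕ} (h : Leg board C k mv) :
    mv.card ≤ k := by
  rcases h.2 with h | h <;> omega

lemma loc_card (n : ℕ) (o : ℤ) (X : Finset Edge) : (loc n o X).card ≤ X.card :=
  Finset.card_le_card_of_injOn (sh o) (fun _ he => (mem_loc.1 (Finset.mem_coe.1 he)).2)
    (sh_inj o).injOn

lemma best_block {n p r : ℕ} (hr : 1 ≤ r) (hp : 1 ≤ p) (X : Finset Edge) (hX : X.card ≤ p) :
    ∃ i < (p + r - 1) / r, (loc n ((i : ℤ) * (n+1)) X).card ≤ r := by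
  classical
  by_contra hc
  push Not at hc
  set k := (p + r - 1) / r with hk
  have hk1 : p ≤ k * r := by
    have h1 := Nat.div_add_mod (p + r - 1) r
    have h2 := Nat.mod_lt (p + r - 1) (show 0 < r by omega)
    rw [← hk] at h1
    rw [Nat.mul_comm]
    omega
  have hkpos : 0 < k := by
    rcases Nat.eq_zero_or_pos k with h | h
    · rw [h] at hk1; omega
    · exact h
  have hle : ∀ i ∈ Finset.range k, r + 1 ≤
      ((loc n ((i : ℤ) * (n+1)) X).image (sh ((i : ℤ) * (n+1)))).card := by
    intro i hi
    rw [Finset.card_image_of_injective _ (sh_inj _)]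
    exact hc i (Finset.mem_range.1 hi)
  have hsum : k * (r + 1) ≤ X.card := by
    calc k * (r+1) = ∑ i ∈ Finset.range k, (r+1) := by simp
      _ ≤ _ := Finset.sum_le_sum hle
      _ = ((Finset.range k).biUnion fun i =>
            (loc n ((i : ℤ) * (n+1)) X).image (sh ((i : ℤ) * (n+1)))).card := by
          rw [Finset.card_biUnion]
          intro i _ j _ hij
          simp only [Function.onFun]
          rw [Finset.disjoint_left]
          intro e he he'
          obtain ⟨u, hu, rfl⟩ := Finset.mem_image.1 he
          obtain ⟨v, hv, huv⟩ := Finset.mem_image.1 he'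
          have hu1 : 1 ≤ u.1.1 ∧ u.1.1 ≤ n := by
            have := mem_dE.1 (mem_loc.1 hu).1
            obtain ⟨⟨x,y⟩,_|_⟩ := u
            · rw [mem_sE_false] at this; push_cast at this; simp only; omega
            · rw [mem_sE_true] at this; push_cast at this; simp only; omega
          have hv1 : 1 ≤ v.1.1 ∧ v.1.1 ≤ n := by
            have := mem_dE.1 (mem_loc.1 hv).1
            obtain ⟨⟨x,y⟩,_|_⟩ := v
            · rw [mem_sE_false] at this; push_cast at this; simp only; omega
            · rw [mem_sE_true] at this; push_cast at this; simp only; omega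
          have heq : v.1.1 + (j:ℤ) * (n+1) = u.1.1 + (i:ℤ) * (n+1) :=
            congrArg (fun e : Edge => e.1.1) huv
          apply hij
          rcases lt_trichotomy i j with h | h | h
          · have : (i:ℤ) + 1 ≤ j := by omega
            nlinarith
          · exact h
          · have : (j:ℤ) + 1 ≤ i := by omega
            nlinarith
      _ ≤ X.card := by
          refine Finset.card_le_card ?_
          intro e he
          obtain ⟨i, _, he⟩ := Finset.mem_biUnion.1 he
          obtain ⟨u, hu, rfl⟩ := Finset.mem_image.1 he
          exact (mem_loc.1 hu).2
  have : k * (r+1) = k * r + k := by ring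
  omega

/-- **Proposition.** For all (positive) natural numbers `m, n, p, r` with `n > r` and
`m ≥ ⌈p/r⌉ · (n+1)`, Breaker has a winning strategy for the `(p, p+5r)`-crossing game
on `S_{m×n}`. (Here `⌈p/r⌉ = (p + r - 1)/r` in natural division.) -/
theorem breaker_wins_with_extra_power
    (m n p r : ℕ) (hp : 1 ≤ p) (hr : 1 ≤ r) (hn : r < n)
    (hm : ((p + r - 1) / r) * (n + 1) ≤ m) :
    BreakerWins (sEdges m n) (HasCrossing m n) p (p + 5 * r) := by
  classical
  refine breaker_of_inv (sEdges m n) (HasCrossing m n) p (p + 5 * r) (fun A B h => has_mono h)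
    (Jinv m n p r) ?_ ?_ ?_
  · intro mv hl
    obtain ⟨i, hi, hc⟩ := best_block (n := n) hr hp mv hl.card_le
    obtain ⟨N, hN1, hN2, hN3⟩ := neutral hn (by omega) _ hc
    have hpre : Pre m n r ((i:ℤ) * (n+1)) mv N mv ∅ := by
      refine ⟨by positivity, ?_, subset_rfl, fun e he => (Finset.mem_sdiff.1 (hN1 he)).1, hN2, ?_,
        hN3, by simp⟩
      · have h1 : (i + 1) * (n + 1) ≤ m := (Nat.mul_le_mul_right _ hi).trans hm
        have h2 : ((i:ℤ) + 1) * (n + 1) ≤ m := by exact_mod_cast h1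
        linarith
      · intro e he hm
        have := Finset.mem_sdiff.1 (hN1 he)
        exact this.2 (mem_loc.2 ⟨this.1, hm⟩)
    obtain ⟨mv', h1, h2⟩ := core (p := p) hpre (fun k => by
      refine SN_mono (wn_mono n) k ∅ ∅ _ _ ?_ (by simp) (SN_start n p k)
      simp [loc])
    refine ⟨mv', by simpa using h1, by simpa using h2⟩
  · rintro A B ⟨o, M0, N, hpre, hNB, hS⟩ mv hl
    have hd : ∀ e ∈ mv, e ∉ A ∧ e ∉ B := by
      intro e he
      have := (hl.1 (Finset.mem_coe.2 he)).2
      simpa using this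
    have hpre' : Pre m n r o M0 N (A ∪ mv) B := by
      refine ⟨hpre.o0, hpre.o1, hpre.M0A.trans Finset.subset_union_left, hpre.ND, hpre.Nc, ?_,
        hpre.neu, ?_⟩
      · intro e he h
        rcases Finset.mem_union.1 h with h | h
        · exact hpre.NA e he h
        · exact (hd _ h).2 (hNB e he)
      · refine Finset.disjoint_union_left.2 ⟨hpre.dis, ?_⟩
        rw [Finset.disjoint_left]
        exact fun e he => (hd e he).2
    obtain ⟨mv', h1, h2⟩ := core (p := p) hpre' (fun k => by
      refine SN_mono (wn_mono n) k _ _ _ _ ?_ subset_rfl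
        (hS (loc n o mv) (fun e he => (mem_loc.1 he).1) ((loc_card _ _ _).trans hl.card_le) ?_ k)
      · intro e he
        simp only [mem_loc, Finset.mem_union, Finset.mem_sdiff] at he ⊢
        tauto
      · rw [Finset.disjoint_left]
        intro e he he'
        have := hd _ (mem_loc.1 he).2
        rcases Finset.mem_union.1 (mem_loc.1 he').2 with h | h
        · exact this.2 h
        · exact this.1 (hpre.M0A h))
    refine ⟨mv', ?_, h2⟩
    rw [Finset.union_right_comm]
    exact h1
  · rintro A B ⟨o, M0, N, hpre, hNB, hS⟩ hc
    have h1 := hpre.neu _ (fun e he => he.1) (fun e he hN => hpre.NA e hN (by exact_mod_cast he.2))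
      (block (by omega) hpre.o0 hpre.o1 hc)
    have h2 := hS ∅ (by simp) (by simp) (by simp) 0
    refine h2 (has_mono ?_ h1)
    rintro e ⟨⟨h3, h4⟩, h5⟩
    have h5 : e ∉ loc n o M0 := by exact_mod_cast h5
    have h4 : sh o e ∈ A := by exact_mod_cast h4
    rw [Finset.union_empty, Finset.mem_coe, mem_loc, Finset.mem_sdiff]
    exact ⟨mem_dE.2 h3, h4, fun h => h5 (mem_loc.2 ⟨mem_dE.2 h3, h⟩)⟩

end CrossingGames
end

section
/- Let k ∈ ℕ. Suppose a and b are vertices of a finite multigraph G such that G has a (k+1)-positive subgraph containing both a and b. Then Join has a winning strategy for the (k,k)-Shannon switching game played on (G,a,b). -/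
namespace ShannonSwitching

variable {V E : Type}

/-- `u` is joined to `v` by a walk using only edges from `F`, in the multigraph with
edge-endpoint map `ends`. -/
def Reach (ends : E → V × V) (F : Set E) (u v : V) : Prop :=
  Relation.ReflTransGen
    (fun a b => ∃ e ∈ F,
      ((ends e).1 = a ∧ (ends e).2 = b) ∨ ((ends e).1 = b ∧ (ends e).2 = a)) u v

/-- The subgraph `(V', E')` of the multigraph is `k`-positive: it contains `k` pairwise
edge-disjoint connected spanning subgraphs. -/
def kPositive (ends : E → V × V) (V' : Set V) (E' : Set E) (k : ℕ) : Prop :=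
  ∃ F : Fin k → Set E,
    (∀ i, F i ⊆ E') ∧
    (Pairwise fun i j => Disjoint (F i) (F j)) ∧
    ∀ i, ∀ u ∈ V', ∀ v ∈ V', Reach ends (F i) u v

/-- A strategy in the Shannon switching game: given the list of all moves played so far
(oldest first), produce the next move (a finite set of edges). -/
abbrev SStrategy (E : Type) : Type := List (Finset E) → Finset E

variable [DecidableEq E]

/-- The union of the moves sitting in positions of the given parity of a history. -/
def altUnion : Bool → List (Finset E) → Finset E
  | _, [] => ∅
  | true, mv :: h => mv ∪ altUnion false h
  | false, _ :: h => altUnion true h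

/-- All edges claimed by the player moving first in a history. -/
def firstClaimed (h : List (Finset E)) : Finset E := altUnion true h

/-- All edges claimed by the player moving second in a history. -/
def secondClaimed (h : List (Finset E)) : Finset E := altUnion false h

/-- All edges claimed so far in a history. -/
def allClaimed (h : List (Finset E)) : Finset E := h.foldr (· ∪ ·) ∅

/-- The history of moves (oldest first) after `t` full rounds, when the player moving
first uses strategy `σ` and the player moving second uses strategy `τ`. -/
def hist (σ τ : SStrategy E) : ℕ → List (Finset E)
  | 0 => []
  | t + 1 =>
    let h := hist σ τ t
    h ++ [σ h, τ (h ++ [σ h])]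

/-- The move `mv` is legal on `board` after the history `h` for a player of bias `k`: it
consists of as-yet-unclaimed edges of the board, exactly `k` of them unless fewer than
`k` unclaimed edges remain, in which case the player takes all of them. -/
def LegalMove (board : Set E) (h : List (Finset E)) (k : ℕ) (mv : Finset E) : Prop :=
  (↑mv : Set E) ⊆ board \ ↑(allClaimed h) ∧
    (mv.card = k ∨ (mv.card < k ∧ board \ ↑(allClaimed h) ⊆ (↑mv : Set E)))

/-- The player moving first (with bias `k`) always moves legally when playing `σ`
against `τ`. -/
def FirstLegal (board : Set E) (k : ℕ) (σ τ : SStrategy E) : Prop :=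
  ∀ t, LegalMove board (hist σ τ t) k (σ (hist σ τ t))

/-- The player moving second (with bias `k`) always moves legally when playing `τ`
against `σ`. -/
def SecondLegal (board : Set E) (k : ℕ) (σ τ : SStrategy E) : Prop :=
  ∀ t, LegalMove board (hist σ τ t ++ [σ (hist σ τ t)]) k
    (τ (hist σ τ t ++ [σ (hist σ τ t)]))

/-- Join has a winning strategy for the `(k,k)`-Shannon switching game on `(G,a,b)`:
Cut moves first, deleting `k` unsafe edges per turn, Join answers by marking `k` unsafe
edges as safe per turn, and Join can guarantee that when all edges have been used up her
safe edges contain a path from `a` to `b` (equivalently, that at some point the safe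
edges contain such a path, since safe edges only accumulate). -/
def JoinWins (ends : E → V × V) (a b : V) (k : ℕ) : Prop :=
  ∃ τ : SStrategy E, ∀ σ : SStrategy E,
    FirstLegal (Set.univ : Set E) k σ τ →
      SecondLegal (Set.univ : Set E) k σ τ ∧
      ∃ t, Reach ends (↑(secondClaimed (hist σ τ t)) : Set E) a b

section Helpers

theorem Reach.mono' {ends : E → V × V} {X Y : Set E} (h : X ⊆ Y) {u v : V}
    (hr : Reach ends X u v) : Reach ends Y u v := by
  induction hr with
  | refl => exact Relation.ReflTransGen.refl
  | tail _ hs ih =>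
    obtain ⟨e, he, h'⟩ := hs
    exact Relation.ReflTransGen.tail ih ⟨e, h he, h'⟩

theorem Reach.symm' {ends : E → V × V} {X : Set E} {u v : V}
    (hr : Reach ends X u v) : Reach ends X v u := by
  induction hr with
  | refl => exact Relation.ReflTransGen.refl
  | tail _ hs ih =>
    obtain ⟨e, he, h⟩ := hs
    exact Relation.ReflTransGen.head ⟨e, he, h.symm⟩ ih

theorem Reach.trans' {ends : E → V × V} {X : Set E} {u v w : V}
    (h1 : Reach ends X u v) (h2 : Reach ends X v w) : Reach ends X u w :=
  Relation.ReflTransGen.trans h1 h2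

theorem Reach.edge' {ends : E → V × V} {X : Set E} {e : E} (he : e ∈ X) :
    Reach ends X (ends e).1 (ends e).2 :=
  Relation.ReflTransGen.single ⟨e, he, Or.inl ⟨rfl, rfl⟩⟩

theorem Reach.of_edges {ends : E → V × V} {X Y : Set E}
    (h : ∀ e ∈ Y, Reach ends X (ends e).1 (ends e).2) {u v : V}
    (hr : Reach ends Y u v) : Reach ends X u v := by
  induction hr with
  | refl => exact Relation.ReflTransGen.refl
  | tail _ hs ih =>
    obtain ⟨e, he, ⟨h1, h2⟩ | ⟨h1, h2⟩⟩ := hs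
    · have := h e he
      rw [h1, h2] at this
      exact ih.trans' this
    · have := (h e he).symm'
      rw [h1, h2] at this
      exact ih.trans' this

theorem Reach.split {ends : E → V × V} {X : Set E} {e : E} {u v : V}
    (hr : Reach ends (X ∪ {e}) u v) :
    Reach ends X u v ∨ (Reach ends X u (ends e).1 ∧ Reach ends X (ends e).2 v) ∨
      (Reach ends X u (ends e).2 ∧ Reach ends X (ends e).1 v) := by
  induction hr with
  | refl => exact Or.inl Relation.ReflTransGen.refl
  | @tail b c _ hs ih =>
    obtain ⟨f, hf, hfe⟩ := hs
    rcases hf with hf | hf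
    · have hbc : Reach ends X b c := Relation.ReflTransGen.single ⟨f, hf, hfe⟩
      rcases ih with h | ⟨h, h'⟩ | ⟨h, h'⟩
      · exact Or.inl (h.trans' hbc)
      · exact Or.inr (Or.inl ⟨h, h'.trans' hbc⟩)
      · exact Or.inr (Or.inr ⟨h, h'.trans' hbc⟩)
    · obtain rfl : f = e := hf
      rcases hfe with ⟨rfl, rfl⟩ | ⟨rfl, rfl⟩
      · rcases ih with h | ⟨h, h'⟩ | ⟨h, h'⟩
        · exact Or.inr (Or.inl ⟨h, Relation.ReflTransGen.refl⟩)
        · exact Or.inr (Or.inl ⟨h, Relation.ReflTransGen.refl⟩)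
        · exact Or.inl h
      · rcases ih with h | ⟨h, h'⟩ | ⟨h, h'⟩
        · exact Or.inr (Or.inr ⟨h, Relation.ReflTransGen.refl⟩)
        · exact Or.inl h
        · exact Or.inr (Or.inr ⟨h, Relation.ReflTransGen.refl⟩)

/-- All of `V'` is connected through `X`. -/
def Span (ends : E → V × V) (V' : Set V) (X : Set E) : Prop :=
  ∀ u ∈ V', ∀ v ∈ V', Reach ends X u v

theorem Span.mono' {ends : E → V × V} {V' : Set V} {X Y : Set E} (h : X ⊆ Y)
    (hs : Span ends V' X) : Span ends V' Y :=
  fun u hu v hv => (hs u hu v hv).mono' h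

theorem Span.exchange {ends : E → V × V} {V' : Set V} {X Y : Set E} {e : E}
    (hY : ∀ f ∈ Y, (ends f).1 ∈ V' ∧ (ends f).2 ∈ V')
    (h1 : Span ends V' (X ∪ {e})) (h2 : Span ends V' (Y ∪ X)) :
    Span ends V' X ∨ ∃ f ∈ Y, Span ends V' (X ∪ {f}) := by
  by_cases hall : ∀ f ∈ Y, Reach ends X (ends f).1 (ends f).2
  · left
    intro u hu v hv
    refine Reach.of_edges ?_ (h2 u hu v hv)
    rintro f (hf | hf)
    · exact hall f hf
    · exact Reach.edge' hf
  · right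
    push Not at hall
    obtain ⟨f, hf, hnf⟩ := hall
    refine ⟨f, hf, ?_⟩
    have hm : X ⊆ X ∪ {f} := Set.subset_union_left
    have hfe : Reach ends (X ∪ {f}) (ends f).1 (ends f).2 := Reach.edge' (Or.inr rfl)
    have he : Reach ends (X ∪ {f}) (ends e).1 (ends e).2 := by
      rcases (h1 _ (hY f hf).1 _ (hY f hf).2).split with h | ⟨h, h'⟩ | ⟨h, h'⟩
      · exact absurd h hnf
      · exact ((h.symm'.mono' hm).trans' hfe).trans' (h'.symm'.mono' hm)
      · exact ((h'.mono' hm).trans' hfe.symm').trans' (h.mono' hm)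
    intro u hu v hv
    refine Reach.of_edges ?_ (h1 u hu v hv)
    rintro g (hg | hg)
    · exact Reach.edge' (Or.inl hg)
    · obtain rfl : g = e := hg
      exact he

theorem Span.multi {ends : E → V × V} {V' : Set V} {Y : Set E}
    (hY : ∀ f ∈ Y, (ends f).1 ∈ V' ∧ (ends f).2 ∈ V') (D : Finset E) :
    ∀ X : Set E, Span ends V' (X ∪ ↑D) → Span ends V' (Y ∪ X) →
    ∃ A : Finset E, (↑A : Set E) ⊆ Y ∧ A.card ≤ D.card ∧ Span ends V' (X ∪ ↑A) := by
  induction D using Finset.induction_on with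
  | empty => intro X h _; exact ⟨∅, by simp, le_rfl, h⟩
  | insert e D he ih =>
    intro X h1 h2
    obtain ⟨A, hA, hc, hs⟩ := ih (X ∪ {e})
      (h1.mono' (by intro x hx; simp at hx ⊢; tauto))
      (h2.mono' (by intro x hx; simp at hx ⊢; tauto))
    rw [Finset.card_insert_of_notMem he]
    have := Span.exchange (X := X ∪ ↑A) (e := e) hY
      (hs.mono' (by intro x hx; simp at hx ⊢; tauto))
      (h2.mono' (by intro x hx; simp at hx ⊢; tauto))
    rcases this with h | ⟨f, hf, h⟩
    · exact ⟨A, hA, by omega, h⟩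
    · refine ⟨insert f A, ?_, (Finset.card_insert_le _ _).trans (by omega), ?_⟩
      · intro x hx
        simp at hx
        rcases hx with rfl | hx
        · exact hf
        · exact hA hx
      · exact h.mono' (by intro x hx; simp at hx ⊢; tauto)

/-- The invariant of Join. -/
def Inv (ends : E → V × V) (V' : Set V) (E' : Set E) (k : ℕ) (S C : Finset E) : Prop :=
  ∃ F : Fin (k + 1) → Set E,
    (∀ i, F i ⊆ E') ∧ (∀ i, Disjoint (F i) (↑C : Set E)) ∧
    (Pairwise fun i j => Disjoint (F i) (F j)) ∧
    ∀ i, Span ends V' (F i ∪ ↑S)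

theorem Inv.step {ends : E → V × V} {V' : Set V} {E' : Set E} {k : ℕ} {S C D : Finset E}
    (hE : ∀ e ∈ E', (ends e).1 ∈ V' ∧ (ends e).2 ∈ V')
    (h : Inv ends V' E' k S C) (hD : D.card ≤ k) :
    ∃ A : Finset E, Disjoint A (C ∪ D) ∧ A.card ≤ k ∧
      ∀ B : Finset E, A ⊆ B → Inv ends V' E' k (S ∪ B) (C ∪ D ∪ B) := by
  classical
  obtain ⟨F, hFE, hFC, hdis, hsp⟩ := h
  let d : Fin (k + 1) → Finset E := fun i => D.filter (· ∈ F i)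
  have hdd : ∀ i ∈ (Finset.univ : Finset (Fin (k+1))), ∀ j ∈ (Finset.univ : Finset (Fin (k+1))),
      i ≠ j → Disjoint (d i) (d j) := by
    intro i _ j _ hij
    rw [Finset.disjoint_left]
    intro x hx hx'
    simp only [d, Finset.mem_filter] at hx hx'
    exact Set.disjoint_left.1 (hdis hij) hx.2 hx'.2
  have hsum : ∑ i, (d i).card ≤ k := by
    rw [← Finset.card_biUnion hdd]
    refine le_trans (Finset.card_le_card ?_) hD
    intro x hx
    simp only [d, Finset.mem_biUnion, Finset.mem_filter] at hx
    obtain ⟨_, _, hx, _⟩ := hx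
    exact hx
  obtain ⟨j, hj⟩ : ∃ j, d j = ∅ := by
    by_contra hne
    push Not at hne
    have : ∑ i : Fin (k+1), 1 ≤ ∑ i, (d i).card :=
      Finset.sum_le_sum (fun i _ => Finset.card_pos.2 (by
        exact hne i))
    simp at this
    omega
  have hjD : ∀ x ∈ F j, x ∉ D := by
    intro x hx hxD
    have : x ∈ d j := by simp [d, hx, hxD]
    rw [hj] at this
    simp at this
  have key : ∀ i, ∃ A : Finset E, (↑A : Set E) ⊆ F j ∧ A.card ≤ (d i).card ∧
      Span ends V' ((F i \ ↑D ∪ ↑S) ∪ ↑A) := by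
    intro i
    refine Span.multi (fun f hf => hE f (hFE j hf)) (d i) (F i \ ↑D ∪ ↑S) ?_ ?_
    · refine (hsp i).mono' ?_
      intro x hx
      simp [d] at hx ⊢
      tauto
    · refine (hsp j).mono' ?_
      intro x hx
      simp at hx ⊢
      tauto
  choose A hA1 hA2 hA3 using key
  refine ⟨Finset.univ.biUnion A, ?_, ?_, ?_⟩
  · rw [Finset.disjoint_left]
    intro x hx hx'
    simp only [Finset.mem_biUnion, Finset.mem_univ, true_and] at hx
    obtain ⟨i, hi⟩ := hx
    have hxj := hA1 i hi
    rcases Finset.mem_union.1 hx' with h | h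
    · exact Set.disjoint_left.1 (hFC j) hxj h
    · exact hjD x hxj h
  · exact Finset.card_biUnion_le.trans ((Finset.sum_le_sum fun i _ => hA2 i).trans hsum)
  · intro B hB
    refine ⟨fun i => F i \ (↑D ∪ ↑B), fun i x hx => hFE i hx.1, ?_, ?_, ?_⟩
    · intro i
      rw [Set.disjoint_left]
      rintro x ⟨hx, hx'⟩ hxC
      have := Set.disjoint_left.1 (hFC i) hx
      simp at hx' hxC this
      tauto
    · intro i i' hii
      exact (hdis hii).mono Set.sdiff_subset Set.sdiff_subset
    · intro i
      refine (hA3 i).mono' ?_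
      intro x hx
      have : x ∈ A i → x ∈ B := fun hxA => hB (Finset.mem_biUnion.2 ⟨i, Finset.mem_univ _, hxA⟩)
      simp at hx ⊢
      tauto

theorem allClaimed_append (h h' : List (Finset E)) :
    allClaimed (h ++ h') = allClaimed h ∪ allClaimed h' := by
  induction h with
  | nil => simp [allClaimed]
  | cons x h ih =>
    simp only [allClaimed, List.cons_append, List.foldr_cons] at ih ⊢
    rw [ih, Finset.union_assoc]

theorem altUnion_hist_append (σ τ : SStrategy E) (t : ℕ) (l : List (Finset E)) (b : Bool) :
    altUnion b (hist σ τ t ++ l) = altUnion b (hist σ τ t) ∪ altUnion b l := by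
  induction t generalizing l with
  | zero => simp [hist, altUnion]
  | succ t ih =>
    simp only [hist]
    rw [List.append_assoc, ih, ih [_, _]]
    cases b <;> simp [altUnion, Finset.union_assoc]

end Helpers

/-- **Lehman's theorem, biased version.** Let `k ≥ 1`. If `a, b` are vertices of a finite
multigraph `G` (given by an edge-endpoint map `ends`) admitting a `(k+1)`-positive
subgraph `(V', E')` containing both `a` and `b`, then Join has a winning strategy for the
`(k,k)`-Shannon switching game on `(G, a, b)`. -/
theorem join_wins_biased_shannon_switching_game
    {V E : Type} [Fintype V] [Fintype E] [DecidableEq E]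
    (ends : E → V × V) (a b : V) (k : ℕ) (hk : 1 ≤ k)
    (hpos : ∃ (V' : Set V) (E' : Set E), a ∈ V' ∧ b ∈ V' ∧
      (∀ e ∈ E', (ends e).1 ∈ V' ∧ (ends e).2 ∈ V') ∧
      kPositive ends V' E' (k + 1)) :
    JoinWins ends a b k := by
  classical
  obtain ⟨V', E', ha, hb, hE, F, hF1, hF2, hF3⟩ := hpos
  let P : List (Finset E) → Finset E → Prop := fun h mv =>
    LegalMove Set.univ h k mv ∧
      Inv ends V' E' k (secondClaimed h ∪ mv) (allClaimed h ∪ mv)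
  let τ : SStrategy E := fun h => if hx : ∃ mv, P h mv then hx.choose else ∅
  have hτ : ∀ h, (∃ mv, P h mv) → P h (τ h) := by
    intro h hx
    simp only [τ, dif_pos hx]
    exact hx.choose_spec
  refine ⟨τ, fun σ hσ => ?_⟩
  have hsec1 : ∀ t, secondClaimed (hist σ τ t ++ [σ (hist σ τ t)]) =
      secondClaimed (hist σ τ t) := by
    intro t
    simp [secondClaimed, altUnion_hist_append, altUnion]
  have hsec2 : ∀ t, secondClaimed (hist σ τ (t + 1)) =
      secondClaimed (hist σ τ t) ∪ τ (hist σ τ t ++ [σ (hist σ τ t)]) := by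
    intro t
    simp [secondClaimed, hist, altUnion_hist_append, altUnion]
  have hall1 : ∀ t, allClaimed (hist σ τ t ++ [σ (hist σ τ t)]) =
      allClaimed (hist σ τ t) ∪ σ (hist σ τ t) := by
    intro t
    rw [allClaimed_append]
    simp [allClaimed]
  have hall2 : ∀ t, allClaimed (hist σ τ (t + 1)) =
      allClaimed (hist σ τ t) ∪ σ (hist σ τ t) ∪ τ (hist σ τ t ++ [σ (hist σ τ t)]) := by
    intro t
    simp only [hist]
    rw [allClaimed_append]
    simp [allClaimed]
  have hex : ∀ t, Inv ends V' E' k (secondClaimed (hist σ τ t)) (allClaimed (hist σ τ t)) →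
      ∃ mv, P (hist σ τ t ++ [σ (hist σ τ t)]) mv := by
    intro t ht
    have hc : (σ (hist σ τ t)).card ≤ k := by
      rcases (hσ t).2 with h | h
      · exact h.le
      · exact h.1.le
    obtain ⟨A, hA1, hA2, hA3⟩ := ht.step hE hc
    simp only [P, LegalMove, hall1, hsec1]
    set C := allClaimed (hist σ τ t) ∪ σ (hist σ τ t)
    have hAC : A ⊆ Cᶜ := by
      intro x hx
      simpa using Finset.disjoint_left.1 hA1 hx
    by_cases hk' : k ≤ (Cᶜ).card
    · obtain ⟨B, hB1, hB2, hB3⟩ := Finset.exists_subsuperset_card_eq hAC hA2 hk'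
      refine ⟨B, ⟨?_, Or.inl hB3⟩, hA3 B hB1⟩
      intro x hx
      simpa using hB2 hx
    · refine ⟨Cᶜ, ⟨?_, Or.inr ⟨by omega, ?_⟩⟩, hA3 _ hAC⟩
      · intro x hx
        simpa using hx
      · intro x hx
        simpa using hx
  have hinv : ∀ t, Inv ends V' E' k (secondClaimed (hist σ τ t)) (allClaimed (hist σ τ t)) := by
    intro t
    induction t with
    | zero =>
      refine ⟨F, hF1, ?_, hF2, ?_⟩
      · intro i; simp [hist, allClaimed]
      · intro i u hu v hv
        exact (hF3 i u hu v hv).mono' Set.subset_union_left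
    | succ t ih =>
      have h := (hτ _ (hex t ih)).2
      rw [hall1, hsec1] at h
      rw [hall2, hsec2]
      exact h
  refine ⟨fun t => (hτ _ (hex t (hinv t))).1, ?_⟩
  have hcard : ∀ t, allClaimed (hist σ τ t) = Finset.univ ∨
      t ≤ (allClaimed (hist σ τ t)).card := by
    intro t
    induction t with
    | zero => right; simp
    | succ t ih =>
      rw [hall2]
      rcases ih with h | h
      · left; simp [h]
      · obtain ⟨hl1, hl2⟩ := hσ t
        have hdisj : Disjoint (allClaimed (hist σ τ t)) (σ (hist σ τ t)) := by
          rw [Finset.disjoint_right]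
          intro x hx
          simpa using hl1 hx
        rcases hl2 with h2 | ⟨_, h2⟩
        · right
          have := Finset.card_union_of_disjoint hdisj
          have h3 := Finset.card_le_card (Finset.subset_union_left
            (s₁ := allClaimed (hist σ τ t) ∪ σ (hist σ τ t))
            (s₂ := τ (hist σ τ t ++ [σ (hist σ τ t)])))
          omega
        · left
          ext x
          by_cases hx : x ∈ allClaimed (hist σ τ t)
          · simp [hx]
          · have : x ∈ σ (hist σ τ t) := h2 ⟨trivial, by simpa using hx⟩
            simp [this]
  have huniv : allClaimed (hist σ τ (Fintype.card E)) = Finset.univ := by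
    rcases hcard (Fintype.card E) with h | h
    · exact h
    · exact (Finset.card_eq_iff_eq_univ _).1 (le_antisymm (Finset.card_le_univ _) h)
  refine ⟨Fintype.card E, ?_⟩
  obtain ⟨G, _, hG, _, hs⟩ := hinv (Fintype.card E)
  have h0 := hG 0
  rw [huniv] at h0
  refine (hs 0 a ha b hb).mono' ?_
  rintro x (hx | hx)
  · exact absurd (Finset.mem_coe.2 (Finset.mem_univ x)) (Set.disjoint_left.1 h0 hx)
  · exact hx

end ShannonSwitching
end
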